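/- arXiv:1506.00701 — 2 statements merged into one kernel-verified Lean document; each statement's English description precedes it below -/
import Mathlib

section
/- Let A be a symmetric n×n real matrix satisfying xᵀAx ≤ Λmax·‖x‖² for all x ∈ ℝⁿ, and let B be an m×n real matrix satisfying ‖Bx‖ ≤ Σ·‖x‖ for all x ∈ ℝⁿ (with Σ ≥ 0). Then every eigenvalue λ of the saddle-point matrix C = [[A, Bᵀ], [B, 0]] satisfies λ ≤ (Λmax + √(Λmax² + 4Σ²))/2. -/
open Matrix

/-!
Write `z = (x, y)`. The quadratic form of `[[A, Bᵀ], [B, D]]` at `z` is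
`xᵀ A x + 2 yᵀ B x + yᵀ D y`, which the bounds on the blocks and Cauchy–Schwarz compare with the
quadratic form of the `2 × 2` matrix `[[α, σ], [σ, δ]]` at `(‖x‖, ‖y‖)`. The largest eigenvalue of
that matrix therefore bounds the Rayleigh quotients of the block matrix, hence its eigenvalues.
-/

section QuadraticForm

variable {R ι κ : Type*} [Fintype ι] [Fintype κ]

lemma dotProduct_fromBlocks_transpose_mulVec [CommSemiring R] (A : Matrix ι ι R)
    (B : Matrix κ ι R) (D : Matrix κ κ R) (x : ι → R) (y : κ → R) :
    Sum.elim x y ⬝ᵥ fromBlocks A Bᵀ B D *ᵥ Sum.elim x y =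
      x ⬝ᵥ A *ᵥ x + 2 * (y ⬝ᵥ B *ᵥ x) + y ⬝ᵥ D *ᵥ y := by
  rw [fromBlocks_mulVec, Sum.elim_comp_inl, Sum.elim_comp_inr, sumElim_dotProduct_sumElim,
    dotProduct_add, dotProduct_add, dotProduct_transpose_mulVec]
  ring

variable [CommRing R] [LinearOrder R] [IsStrictOrderedRing R]

lemma dotProduct_self_nonneg (x : ι → R) : 0 ≤ x ⬝ᵥ x :=
  Fintype.sum_nonneg fun i ↦ mul_self_nonneg (x i)

lemma sq_dotProduct_le (x y : ι → R) : (x ⬝ᵥ y) ^ 2 ≤ (x ⬝ᵥ x) * (y ⬝ᵥ y) := by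
  simpa only [dotProduct, sq] using Finset.sum_mul_sq_le_sq_mul_sq Finset.univ x y

lemma two_mul_dotProduct_mulVec_le {B : Matrix κ ι R} {p q : R} (hp : 0 ≤ p) (hq : 0 ≤ q)
    (hB : ∀ x, B *ᵥ x ⬝ᵥ B *ᵥ x ≤ p * q * (x ⬝ᵥ x)) (x : ι → R) (y : κ → R) :
    2 * (y ⬝ᵥ B *ᵥ x) ≤ p * (x ⬝ᵥ x) + q * (y ⬝ᵥ y) := by
  have hx := dotProduct_self_nonneg x
  have hy := dotProduct_self_nonneg y
  refine two_mul_le_add_of_sq_le_mul (mul_nonneg hp hx) (mul_nonneg hq hy) ?_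
  calc (y ⬝ᵥ B *ᵥ x) ^ 2
    _ ≤ (y ⬝ᵥ y) * (B *ᵥ x ⬝ᵥ B *ᵥ x) := sq_dotProduct_le y (B *ᵥ x)
    _ ≤ (y ⬝ᵥ y) * (p * q * (x ⬝ᵥ x)) := mul_le_mul_of_nonneg_left (hB x) hy
    _ = p * (x ⬝ᵥ x) * (q * (y ⬝ᵥ y)) := by ring

lemma dotProduct_fromBlocks_transpose_mulVec_le {A : Matrix ι ι R} {B : Matrix κ ι R}
    {D : Matrix κ κ R} {α δ μ : R} (hα : α ≤ μ) (hδ : δ ≤ μ)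
    (hA : ∀ x, x ⬝ᵥ A *ᵥ x ≤ α * (x ⬝ᵥ x)) (hD : ∀ y, y ⬝ᵥ D *ᵥ y ≤ δ * (y ⬝ᵥ y))
    (hB : ∀ x, B *ᵥ x ⬝ᵥ B *ᵥ x ≤ (μ - α) * (μ - δ) * (x ⬝ᵥ x)) (z : ι ⊕ κ → R) :
    z ⬝ᵥ fromBlocks A Bᵀ B D *ᵥ z ≤ μ * (z ⬝ᵥ z) := by
  obtain ⟨x, y, rfl⟩ : ∃ x y, z = Sum.elim x y := ⟨_, _, (Sum.elim_comp_inl_inr z).symm⟩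
  rw [dotProduct_fromBlocks_transpose_mulVec, sumElim_dotProduct_sumElim]
  linarith [hA x, hD y, two_mul_dotProduct_mulVec_le (sub_nonneg.2 hα) (sub_nonneg.2 hδ) hB x y]

lemma le_of_mulVec_eq_smul {M : Matrix ι ι R} {μ l : R} {z : ι → R}
    (hM : z ⬝ᵥ M *ᵥ z ≤ μ * (z ⬝ᵥ z)) (hz : z ≠ 0) (hev : M *ᵥ z = l • z) : l ≤ μ := by
  have hpos : 0 < z ⬝ᵥ z :=
    (dotProduct_self_nonneg z).lt_of_ne' (dotProduct_self_eq_zero.not.2 hz)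
  rw [hev, dotProduct_smul, smul_eq_mul] at hM
  exact le_of_mul_le_mul_right hM hpos

end QuadraticForm

/-- The larger eigenvalue of the symmetric matrix `!![α, σ; σ, δ]`, used as a bound for block
matrices; it is encoded as the larger root `μ` of `(μ - α) * (μ - δ) = σ ^ 2`. -/
noncomputable def topEigenvalueTwo (α σ δ : ℝ) : ℝ :=
  (α + δ + √((α - δ) ^ 2 + 4 * σ ^ 2)) / 2

namespace topEigenvalueTwo

variable (α σ δ : ℝ)

lemma abs_sub_le_sqrt : |α - δ| ≤ √((α - δ) ^ 2 + 4 * σ ^ 2) :=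
  Real.abs_le_sqrt (le_add_of_nonneg_right (by positivity))

lemma left_le : α ≤ topEigenvalueTwo α σ δ := by
  rw [topEigenvalueTwo]
  linarith [le_abs_self (α - δ), abs_sub_le_sqrt α σ δ]

lemma right_le : δ ≤ topEigenvalueTwo α σ δ := by
  rw [topEigenvalueTwo]
  linarith [neg_abs_le (α - δ), abs_sub_le_sqrt α σ δ]

lemma sub_mul_sub :
    (topEigenvalueTwo α σ δ - α) * (topEigenvalueTwo α σ δ - δ) = σ ^ 2 := by
  have hsq : √((α - δ) ^ 2 + 4 * σ ^ 2) ^ 2 = (α - δ) ^ 2 + 4 * σ ^ 2 :=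
    Real.sq_sqrt (by positivity)
  rw [topEigenvalueTwo]
  linear_combination hsq / 4

end topEigenvalueTwo

theorem stmt2_general {ι κ : Type*} [Fintype ι] [Fintype κ] {A : Matrix ι ι ℝ}
    {B : Matrix κ ι ℝ} {D : Matrix κ κ ℝ} {α σ δ : ℝ}
    (hA : ∀ x, x ⬝ᵥ A *ᵥ x ≤ α * (x ⬝ᵥ x))
    (hB : ∀ x, B *ᵥ x ⬝ᵥ B *ᵥ x ≤ σ ^ 2 * (x ⬝ᵥ x))
    (hD : ∀ y, y ⬝ᵥ D *ᵥ y ≤ δ * (y ⬝ᵥ y))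
    {l : ℝ} {z : ι ⊕ κ → ℝ} (hz : z ≠ 0) (hev : fromBlocks A Bᵀ B D *ᵥ z = l • z) :
    l ≤ topEigenvalueTwo α σ δ := by
  rw [← topEigenvalueTwo.sub_mul_sub α σ δ] at hB
  have hquad := dotProduct_fromBlocks_transpose_mulVec_le (topEigenvalueTwo.left_le α σ δ)
    (topEigenvalueTwo.right_le α σ δ) hA hD hB z
  exact le_of_mulVec_eq_smul hquad hz hev

/-- Upper bound for the spectrum of the saddle-point matrix `C = [[A, Bᵀ], [B, 0]]`:
if the symmetric matrix `A` satisfies `xᵀ A x ≤ Λmax ‖x‖²` and `‖B x‖ ≤ σ ‖x‖`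
for all `x`, then every eigenvalue `lam` of `C` satisfies
`lam ≤ (Λmax + √(Λmax² + 4σ²))/2`. -/
theorem stmt2 {n m : ℕ} (A : Matrix (Fin n) (Fin n) ℝ) (B : Matrix (Fin m) (Fin n) ℝ)
    (Λmax σ : ℝ) (hσ : 0 ≤ σ) (hA_symm : A.IsSymm)
    (hA : ∀ x : Fin n → ℝ, x ⬝ᵥ A.mulVec x ≤ Λmax * (x ⬝ᵥ x))
    (hB : ∀ x : Fin n → ℝ, (B.mulVec x) ⬝ᵥ (B.mulVec x) ≤ σ ^ 2 * (x ⬝ᵥ x))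
    (lam : ℝ) (z : Fin n ⊕ Fin m → ℝ) (hz : z ≠ 0)
    (hev : (Matrix.fromBlocks A Bᵀ B 0).mulVec z = lam • z) :
    lam ≤ (Λmax + Real.sqrt (Λmax ^ 2 + 4 * σ ^ 2)) / 2 := by
  simpa [topEigenvalueTwo] using stmt2_general hA hB (D := 0) (δ := 0) (by simp) hz hev
end

section
/- Let A be a symmetric positive semidefinite n×n real matrix satisfying xᵀAx ≤ Λmax·‖x‖² for all x ∈ ℝⁿ, and let B be a nonzero m×n real matrix whose smallest nonzero singular value is Σ₁, i.e., ‖Bᵀy‖ ≥ Σ₁‖y‖ for every y in the column space of B. Then every negative eigenvalue λ of the saddle-point matrix C = [[A, Bᵀ], [B, 0]] satisfies λ ≤ (Λmax − √(Λmax² + 4Σ₁²))/2. -/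
open Matrix

/-!
Let `(x, y)` be an eigenvector for `λ < 0`, where `λ` lies below the spectrum of `A`, and put
`T = A - λ`, so that `0 < T ≤ Λ - λ`, `T x = -Bᵀ y` and `B x = λ y`; in particular `y ≠ 0`.
Cauchy–Schwarz for the form `⟪T ·, ·⟫` gives `‖T x‖² ≤ (Λ - λ) ⟪T x, x⟫`, that is,
`‖Bᵀ y‖² ≤ λ (λ - Λ) ‖y‖²`. Since `y = λ⁻¹ B x` lies in the range of `B`, the left side is at least
`σ² ‖y‖²`; hence `σ² ≤ λ (λ - Λ)`, and `λ` is at most the smaller root of `t² - Λ t - σ²`.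
-/

open RCLike
open scoped InnerProductSpace

theorem le_sub_sqrt_div_two_of_le_mul_sub {b c t : ℝ} (ht : 2 * t ≤ b) (hc : c ≤ t * (t - b)) :
    t ≤ (b - √(b ^ 2 + 4 * c)) / 2 := by
  have hsqrt : √(b ^ 2 + 4 * c) ≤ b - 2 * t :=
    Real.sqrt_le_iff.mpr ⟨by linarith, by linarith⟩
  linarith

/-- The saddle-point operator, with block matrix `[[A, B'], [B, 0]]`. The block `B'` is kept
independent of `B`, so that a formal adjoint of `B` can be used where no adjoint operator exists. -/
def saddlePointMap {R E F : Type*} [Semiring R] [AddCommMonoid E] [Module R E] [AddCommMonoid F]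
    [Module R F] (A : E →ₗ[R] E) (B : E →ₗ[R] F) (B' : F →ₗ[R] E) : Module.End R (E × F) :=
  (A.coprod B').prod (B ∘ₗ LinearMap.fst R E F)

theorem saddlePointMap_apply_eq_smul_iff {R E F : Type*} [Semiring R] [AddCommMonoid E]
    [Module R E] [AddCommMonoid F] [Module R F] {A : E →ₗ[R] E} {B : E →ₗ[R] F}
    {B' : F →ₗ[R] E} {μ : R} {x : E} {y : F} :
    saddlePointMap A B B' (x, y) = μ • (x, y) ↔ A x + B' y = μ • x ∧ B x = μ • y :=
  Prod.ext_iff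

section InnerProductSpace

variable {𝕜 E F : Type*} [RCLike 𝕜] [NormedAddCommGroup E] [InnerProductSpace 𝕜 E]
  [NormedAddCommGroup F] [InnerProductSpace 𝕜 F]

theorem norm_inner_apply_sq_le_of_isPositive {T : E →ₗ[𝕜] E} (hT : T.IsPositive) (x y : E) :
    ‖⟪T x, y⟫_𝕜‖ ^ 2 ≤ re ⟪T x, x⟫_𝕜 * re ⟪T y, y⟫_𝕜 := by
  let form : PreInnerProductSpace.Core 𝕜 E :=
    { inner u v := ⟪T u, v⟫_𝕜
      conj_inner_symm u v := by rw [inner_conj_symm, hT.isSymmetric]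
      re_inner_nonneg := hT.re_inner_nonneg_left
      add_left u v w := by rw [map_add, inner_add_left]
      smul_left u v r := by rw [map_smul, inner_smul_left] }
  have hsymm : ‖⟪T y, x⟫_𝕜‖ = ‖⟪T x, y⟫_𝕜‖ := by rw [hT.isSymmetric, norm_inner_symm]
  calc ‖⟪T x, y⟫_𝕜‖ ^ 2 = ‖⟪T x, y⟫_𝕜‖ * ‖⟪T y, x⟫_𝕜‖ := by rw [hsymm, sq]
    _ ≤ re ⟪T x, x⟫_𝕜 * re ⟪T y, y⟫_𝕜 :=
        InnerProductSpace.Core.inner_mul_inner_self_le (c := form) x y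

theorem norm_apply_sq_le_of_isPositive {T : E →ₗ[𝕜] E} (hT : T.IsPositive) {M : ℝ}
    (hM : ∀ x, re ⟪T x, x⟫_𝕜 ≤ M * ‖x‖ ^ 2) (x : E) : ‖T x‖ ^ 2 ≤ M * re ⟪T x, x⟫_𝕜 := by
  rcases eq_or_ne (T x) 0 with hTx | hTx
  · simp [hTx]
  have hpos : 0 < ‖T x‖ ^ 2 := by positivity
  refine le_of_mul_le_mul_right ?_ hpos
  calc ‖T x‖ ^ 2 * ‖T x‖ ^ 2 = ‖⟪T x, T x⟫_𝕜‖ ^ 2 := by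
        rw [inner_self_eq_norm_sq_to_K, norm_pow, norm_ofReal, abs_norm, sq (‖T x‖ ^ 2)]
    _ ≤ re ⟪T x, x⟫_𝕜 * re ⟪T (T x), T x⟫_𝕜 := norm_inner_apply_sq_le_of_isPositive hT x (T x)
    _ ≤ re ⟪T x, x⟫_𝕜 * (M * ‖T x‖ ^ 2) :=
        mul_le_mul_of_nonneg_left (hM (T x)) (hT.re_inner_nonneg_left x)
    _ = M * re ⟪T x, x⟫_𝕜 * ‖T x‖ ^ 2 := by ring

theorem re_inner_sub_ofReal_smul_left (u x : E) (c : ℝ) :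
    re ⟪u - (c : 𝕜) • x, x⟫_𝕜 = re ⟪u, x⟫_𝕜 - c * ‖x‖ ^ 2 := by
  rw [inner_sub_left, map_sub, inner_smul_left, conj_ofReal, re_ofReal_mul,
    inner_self_eq_norm_sq]

theorem isPositive_sub_ofReal_smul_one {A : E →ₗ[𝕜] E} (hA : A.IsSymmetric) {c : ℝ}
    (hc : ∀ x, c * ‖x‖ ^ 2 ≤ re ⟪A x, x⟫_𝕜) : (A - (c : 𝕜) • (1 : E →ₗ[𝕜] E)).IsPositive :=
  ⟨hA.sub (LinearMap.IsSymmetric.one.smul (conj_ofReal c)), fun x =>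
    (sub_nonneg.mpr (hc x)).trans_eq (re_inner_sub_ofReal_smul_left (A x) x c).symm⟩

variable {A : E →ₗ[𝕜] E} {B : E →ₗ[𝕜] F} {B' : F →ₗ[𝕜] E} {a Λ lam : ℝ} {x : E} {y : F}

theorem norm_apply_sq_le_of_saddlePointMap_eq_smul (hA : A.IsSymmetric)
    (hB' : ∀ x y, ⟪B x, y⟫_𝕜 = ⟪x, B' y⟫_𝕜) (hlower : ∀ x, lam * ‖x‖ ^ 2 ≤ re ⟪A x, x⟫_𝕜)
    (hupper : ∀ x, re ⟪A x, x⟫_𝕜 ≤ Λ * ‖x‖ ^ 2)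
    (hxy : saddlePointMap A B B' (x, y) = (lam : 𝕜) • (x, y)) :
    ‖B' y‖ ^ 2 ≤ lam * (lam - Λ) * ‖y‖ ^ 2 := by
  obtain ⟨hx, hy⟩ := saddlePointMap_apply_eq_smul_iff.mp hxy
  let T : E →ₗ[𝕜] E := A - (lam : 𝕜) • (1 : E →ₗ[𝕜] E)
  have hT_le (u : E) : re ⟪T u, u⟫_𝕜 ≤ (Λ - lam) * ‖u‖ ^ 2 := by
    calc re ⟪T u, u⟫_𝕜 = re ⟪A u, u⟫_𝕜 - lam * ‖u‖ ^ 2 := re_inner_sub_ofReal_smul_left (A u) u lam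
      _ ≤ (Λ - lam) * ‖u‖ ^ 2 := by linarith [hupper u]
  have hTx : T x = -B' y := by
    change A x - (lam : 𝕜) • x = -B' y
    rw [← hx, sub_add_cancel_left]
  have hinner : re ⟪T x, x⟫_𝕜 = -lam * ‖y‖ ^ 2 := by
    rw [hTx, inner_neg_left, map_neg, inner_re_symm, ← hB', hy, inner_smul_left, conj_ofReal,
      re_ofReal_mul, inner_self_eq_norm_sq, neg_mul]
  calc ‖B' y‖ ^ 2 = ‖T x‖ ^ 2 := by rw [hTx, norm_neg]
    _ ≤ (Λ - lam) * re ⟪T x, x⟫_𝕜 :=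
        norm_apply_sq_le_of_isPositive (isPositive_sub_ofReal_smul_one hA hlower) hT_le x
    _ = lam * (lam - Λ) * ‖y‖ ^ 2 := by rw [hinner]; ring

theorem eq_zero_of_apply_eq_smul_of_lt (ha : ∀ x, a * ‖x‖ ^ 2 ≤ re ⟪A x, x⟫_𝕜) (hlam : lam < a)
    (hx : A x = (lam : 𝕜) • x) : x = 0 := by
  have hinner : re ⟪A x, x⟫_𝕜 = lam * ‖x‖ ^ 2 := by
    rw [hx, inner_smul_left, conj_ofReal, re_ofReal_mul, inner_self_eq_norm_sq]
  by_contra hne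
  have hpos : 0 < ‖x‖ ^ 2 := by positivity
  exact hlam.not_ge (le_of_mul_le_mul_right ((ha x).trans_eq hinner) hpos)

theorem snd_ne_zero_of_hasEigenvector_saddlePointMap (ha : ∀ x, a * ‖x‖ ^ 2 ≤ re ⟪A x, x⟫_𝕜)
    (hlam : lam < a) (hev : (saddlePointMap A B B').HasEigenvector (lam : 𝕜) (x, y)) : y ≠ 0 := by
  rintro rfl
  obtain ⟨hx, -⟩ := saddlePointMap_apply_eq_smul_iff.mp hev.apply_eq_smul
  rw [map_zero, add_zero] at hx
  exact hev.2 (Prod.mk_eq_zero.mpr ⟨eq_zero_of_apply_eq_smul_of_lt ha hlam hx, rfl⟩)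

theorem stmt4_general {σ : ℝ} (hA : A.IsSymmetric) (hB' : ∀ x y, ⟪B x, y⟫_𝕜 = ⟪x, B' y⟫_𝕜)
    (ha : ∀ x, a * ‖x‖ ^ 2 ≤ re ⟪A x, x⟫_𝕜) (hΛ : ∀ x, re ⟪A x, x⟫_𝕜 ≤ Λ * ‖x‖ ^ 2)
    (hσ : ∀ x, σ ^ 2 * ‖B x‖ ^ 2 ≤ ‖B' (B x)‖ ^ 2) (hneg : lam < 0) (hlam : lam < a)
    (hev : (saddlePointMap A B B').HasEigenvalue (lam : 𝕜)) :
    lam ≤ (Λ - √(Λ ^ 2 + 4 * σ ^ 2)) / 2 := by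
  obtain ⟨⟨x, y⟩, hxy⟩ := hev.exists_hasEigenvector
  have hy : B x = (lam : 𝕜) • y := (saddlePointMap_apply_eq_smul_iff.mp hxy.apply_eq_smul).2
  have hlam0 : (lam : 𝕜) ≠ 0 := ofReal_ne_zero.mpr hneg.ne
  have hy0 : y ≠ 0 := snd_ne_zero_of_hasEigenvector_saddlePointMap ha hlam hxy
  have hx0 : x ≠ 0 := by
    rintro rfl
    exact smul_ne_zero hlam0 hy0 (by rw [← hy, map_zero])
  have hlower (u : E) : lam * ‖u‖ ^ 2 ≤ re ⟪A u, u⟫_𝕜 :=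
    (mul_le_mul_of_nonneg_right hlam.le (sq_nonneg _)).trans (ha u)
  have hlamΛ : lam ≤ Λ :=
    le_of_mul_le_mul_right ((hlower x).trans (hΛ x)) (by positivity : 0 < ‖x‖ ^ 2)
  have hy_range : B ((lam : 𝕜)⁻¹ • x) = y := by rw [map_smul, hy, inv_smul_smul₀ hlam0]
  have hσy : σ ^ 2 * ‖y‖ ^ 2 ≤ ‖B' y‖ ^ 2 := hy_range ▸ hσ ((lam : 𝕜)⁻¹ • x)
  have hB'y : ‖B' y‖ ^ 2 ≤ lam * (lam - Λ) * ‖y‖ ^ 2 :=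
    norm_apply_sq_le_of_saddlePointMap_eq_smul hA hB' hlower hΛ hxy.apply_eq_smul
  have hσ_le : σ ^ 2 ≤ lam * (lam - Λ) :=
    le_of_mul_le_mul_right (hσy.trans hB'y) (by positivity : 0 < ‖y‖ ^ 2)
  exact le_sub_sqrt_div_two_of_le_mul_sub (by linarith) hσ_le

end InnerProductSpace

section EuclideanSpace

variable {m n : Type*} [Fintype m] [Fintype n]

theorem real_norm_sq_eq_dotProduct (x : EuclideanSpace ℝ n) : ‖x‖ ^ 2 = x.ofLp ⬝ᵥ x.ofLp := by
  rw [← real_inner_self_eq_norm_sq, EuclideanSpace.inner_eq_star_dotProduct, star_trivial]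

variable [DecidableEq n]

theorem real_inner_toEuclideanLin_self (A : Matrix n n ℝ) (x : EuclideanSpace ℝ n) :
    inner ℝ (A.toEuclideanLin x) x = x.ofLp ⬝ᵥ A *ᵥ x.ofLp := by
  rw [EuclideanSpace.inner_eq_star_dotProduct, star_trivial, ofLp_toLpLin, toLin'_apply]

variable [DecidableEq m]

theorem real_inner_toEuclideanLin_left (B : Matrix m n ℝ) (x : EuclideanSpace ℝ n)
    (y : EuclideanSpace ℝ m) :
    inner ℝ (B.toEuclideanLin x) y = inner ℝ x (Bᵀ.toEuclideanLin y) := by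
  rw [← conjTranspose_eq_transpose_of_trivial, toEuclideanLin_conjTranspose_eq_adjoint,
    LinearMap.adjoint_inner_right]

theorem hasEigenvalue_saddlePointMap_toEuclideanLin {𝕜 : Type*} [RCLike 𝕜] {A : Matrix n n 𝕜}
    {B : Matrix m n 𝕜} {B' : Matrix n m 𝕜} {μ : 𝕜} {z : n ⊕ m → 𝕜} (hz : z ≠ 0)
    (hev : fromBlocks A B' B 0 *ᵥ z = μ • z) :
    (saddlePointMap A.toEuclideanLin B.toEuclideanLin B'.toEuclideanLin).HasEigenvalue μ := by
  let x : EuclideanSpace 𝕜 n := WithLp.toLp 2 (z ∘ Sum.inl)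
  let y : EuclideanSpace 𝕜 m := WithLp.toLp 2 (z ∘ Sum.inr)
  rw [fromBlocks_mulVec, zero_mulVec, add_zero] at hev
  have hxy : saddlePointMap A.toEuclideanLin B.toEuclideanLin B'.toEuclideanLin (x, y) =
      μ • (x, y) := by
    refine saddlePointMap_apply_eq_smul_iff.mpr ⟨?_, ?_⟩
    · ext i
      exact congrFun hev (Sum.inl i)
    · ext j
      exact congrFun hev (Sum.inr j)
  have hne : (x, y) ≠ 0 := fun h0 => hz <| funext <| Sum.rec
    (fun i => congrArg (fun p => p.1 i) h0) (fun j => congrArg (fun p => p.2 j) h0)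
  exact Module.End.hasEigenvalue_of_hasEigenvector ⟨Module.End.mem_eigenspace_iff.mpr hxy, hne⟩

end EuclideanSpace

/-- Upper bound for the negative eigenvalues of the saddle-point matrix
`C = [[A, Bᵀ], [B, 0]]`: if the symmetric positive semidefinite matrix `A`
satisfies `xᵀ A x ≤ Λmax ‖x‖²` and the nonzero matrix `B` has smallest nonzero
singular value `σ₁` (i.e. `‖Bᵀ y‖ ≥ σ₁ ‖y‖` for every `y` in the column space
of `B`), then every negative eigenvalue `lam` of `C` satisfies
`lam ≤ (Λmax − √(Λmax² + 4σ₁²))/2`. -/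
theorem stmt4 {n m : ℕ} (A : Matrix (Fin n) (Fin n) ℝ) (B : Matrix (Fin m) (Fin n) ℝ)
    (Λmax σ₁ : ℝ) (hσ₁pos : 0 < σ₁) (hA_symm : A.IsSymm) (hA_psd : A.PosSemidef)
    (hA : ∀ x : Fin n → ℝ, x ⬝ᵥ A.mulVec x ≤ Λmax * (x ⬝ᵥ x))
    (hB_ne : B ≠ 0)
    (hB : ∀ y : Fin m → ℝ, (∃ x : Fin n → ℝ, B.mulVec x = y) →
      σ₁ ^ 2 * (y ⬝ᵥ y) ≤ (Bᵀ.mulVec y) ⬝ᵥ (Bᵀ.mulVec y))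
    (lam : ℝ) (hlam : lam < 0) (z : Fin n ⊕ Fin m → ℝ) (hz : z ≠ 0)
    (hev : (Matrix.fromBlocks A Bᵀ B 0).mulVec z = lam • z) :
    lam ≤ (Λmax - Real.sqrt (Λmax ^ 2 + 4 * σ₁ ^ 2)) / 2 := by
  have hA_pos := isPositive_toEuclideanLin_iff.mpr hA_psd
  have hA_le (x : EuclideanSpace ℝ (Fin n)) : inner ℝ (A.toEuclideanLin x) x ≤ Λmax * ‖x‖ ^ 2 := by
    simpa only [real_inner_toEuclideanLin_self, real_norm_sq_eq_dotProduct] using hA x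
  have hB_ge (x : EuclideanSpace ℝ (Fin n)) : σ₁ ^ 2 * ‖B.toEuclideanLin x‖ ^ 2 ≤
      ‖Bᵀ.toEuclideanLin (B.toEuclideanLin x)‖ ^ 2 := by
    simpa only [real_norm_sq_eq_dotProduct, ofLp_toLpLin, toLin'_apply] using hB _ ⟨x, rfl⟩
  exact stmt4_general hA_pos.isSymmetric (real_inner_toEuclideanLin_left B) (a := 0)
    (by simpa only [zero_mul] using hA_pos.re_inner_nonneg_left) hA_le hB_ge hlam hlam
    (hasEigenvalue_saddlePointMap_toEuclideanLin hz hev)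
end
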